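/- Assume G satisfies (Reg), (Mono) and (Twist), and let φ : Ω → ℝ be a G-convex function such that every y ∈ Y supports φ at some point of Ω (i.e., for each y ∈ Y there exist x₀ ∈ Ω and λ ∈ ℝ such that G(·,y,λ) supports φ at x₀). Then there exists ψ : Y → ℝ such that φ = ψ^G, where ψ^G(x) = max_{y ∈ Y} G(x, y, ψ(y)). -/

import Mathlib

set_option autoImplicit false

open MeasureTheory Set

noncomputable section

variable {d N : ℕ}

section SupportsAt

variable {X R : Type*} [Preorder R] {Ω : Set X} {φ : X → R} {x₀ x₁ : X}

/-- The function `g` supports `φ` at `x₀` relative to `Ω`: it is a minorant of `φ` on `Ω` that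
touches `φ` at `x₀`. `G`-convexity is expressed through it with `g = G(·, y, v)`. The functions
live on the whole ambient type `X`, so that `x₀ ∈ Ω` has to be required separately. -/
def SupportsAt (Ω : Set X) (g φ : X → R) (x₀ : X) : Prop :=
  (∀ x ∈ Ω, g x ≤ φ x) ∧ φ x₀ = g x₀

namespace SupportsAt

variable {V : Type*} [LinearOrder V] {g : X → V → R} {v w : V}

lemma param_le_of_forall_le (hg : StrictAnti (g x₀)) (hx₀ : x₀ ∈ Ω)
    (hv : SupportsAt Ω (g · v) φ x₀) (hw : ∀ x ∈ Ω, g x w ≤ φ x) : v ≤ w :=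
  hg.le_iff_ge.mp ((hw x₀ hx₀).trans_eq hv.2)

lemma param_unique (hg₀ : StrictAnti (g x₀)) (hg₁ : StrictAnti (g x₁))
    (hx₀ : x₀ ∈ Ω) (hx₁ : x₁ ∈ Ω)
    (hv : SupportsAt Ω (g · v) φ x₀) (hw : SupportsAt Ω (g · w) φ x₁) : v = w :=
  le_antisymm (hv.param_le_of_forall_le hg₀ hx₀ hw.1)
    (hw.param_le_of_forall_le hg₁ hx₁ hv.1)

end SupportsAt

/-- By `SupportsAt.param_unique`, `φ` determines the parameter with which each `i` supports it,
wherever the contact point lies; this parameter is `ψ i`. -/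
theorem gconvex_is_Gtransform_general {ι V : Type*} [LinearOrder V] {G : X → ι → V → R}
    (hG : ∀ x ∈ Ω, ∀ i, StrictAnti (G x i))
    (hφ : ∀ x₀ ∈ Ω, ∃ i v, SupportsAt Ω (G · i v) φ x₀)
    (hall : ∀ i, ∃ v, ∃ x₀ ∈ Ω, SupportsAt Ω (G · i v) φ x₀) :
    ∃ ψ : ι → V, ∀ x ∈ Ω, IsGreatest (range fun i => G x i (ψ i)) (φ x) := by
  choose ψ contact contact_mem hψ using hall
  refine ⟨ψ, fun x hx => ⟨?_, forall_mem_range.mpr fun i => (hψ i).1 x hx⟩⟩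
  obtain ⟨i, v, hv⟩ := hφ x hx
  obtain rfl : ψ i = v :=
    (hψ i).param_unique (g := (G · i)) (hG _ (contact_mem i) i) (hG x hx i) (contact_mem i) hx hv
  exact ⟨i, hv.2.symm⟩

end SupportsAt

/-- Corollary 2.9: a `G`-convex function supported by every `y ∈ Y` is the
`G`-transform `ψ^G` of some `ψ : Y → ℝ`. -/
theorem gconvex_is_Gtransform
    (hd : 1 ≤ d) (hN : 1 ≤ N)
    {Ω : Set (EuclideanSpace ℝ (Fin d))} (hΩo : IsOpen Ω) (hΩb : Bornology.IsBounded Ω)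
    (y : Fin N → EuclideanSpace ℝ (Fin d)) (hy : Function.Injective y)
    (G : EuclideanSpace ℝ (Fin d) → Fin N → ℝ → ℝ)
    (Gx : EuclideanSpace ℝ (Fin d) → Fin N → ℝ → EuclideanSpace ℝ (Fin d))
    (Gv : EuclideanSpace ℝ (Fin d) → Fin N → ℝ → ℝ)
    (hGx : ∀ x ∈ Ω, ∀ (i : Fin N) (v : ℝ), HasGradientAt (fun x' => G x' i v) (Gx x i v) x)
    (hGv : ∀ x ∈ Ω, ∀ (i : Fin N) (v : ℝ), HasDerivAt (fun v' => G x i v') (Gv x i v) v)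
    (hGxc : ∀ i : Fin N, ContinuousOn (fun q : EuclideanSpace ℝ (Fin d) × ℝ => Gx q.1 i q.2) (Ω ×ˢ Set.univ))
    (hGvc : ∀ i : Fin N, ContinuousOn (fun q : EuclideanSpace ℝ (Fin d) × ℝ => Gv q.1 i q.2) (Ω ×ˢ Set.univ))
    (hReg : ∀ α β : ℝ, α < β → ∃ C : ℝ, ∀ x ∈ Ω, ∀ i : Fin N, ∀ v ∈ Set.Icc α β, ‖Gx x i v‖ ≤ C)
    (hMono : ∀ x ∈ Ω, ∀ (i : Fin N) (v : ℝ), Gv x i v < 0)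
    (hTwist : ∀ x ∈ Ω, Function.Injective fun q : Fin N × ℝ => (G x q.1 q.2, Gx x q.1 q.2))
    (φ : EuclideanSpace ℝ (Fin d) → ℝ)
    (hφ : ∀ x₀ ∈ Ω, ∃ (i : Fin N) (lam : ℝ),
      (∀ x ∈ Ω, G x i lam ≤ φ x) ∧ φ x₀ = G x₀ i lam)
    (hall : ∀ i : Fin N, ∃ lam : ℝ, ∃ x₀ ∈ Ω,
      (∀ x ∈ Ω, G x i lam ≤ φ x) ∧ φ x₀ = G x₀ i lam) :
    ∃ ψ : Fin N → ℝ, ∀ x ∈ Ω,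
      IsGreatest (Set.range fun i => G x i (ψ i)) (φ x) := by
  exact gconvex_is_Gtransform_general
    (fun x hx i => strictAnti_of_hasDerivAt_neg (hGv x hx i) (hMono x hx i)) hφ hall
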